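/- arXiv:2309.01267 — 5 statements merged into one kernel-verified Lean document; each statement's English description precedes it below -/
import Mathlib

section
/- Finite-horizon reach-avoid guarantee from an Isaacs certificate (Proposition 3.1, certificate form). Suppose V : ℕ → Z → ℝ and a time-varying ego policy π : ℕ → Z → Ue satisfy: (i) for every z, V 0 z ≤ min (g z) (ℓ z); and (ii) for every k ∈ ℕ, every z ∈ Z, every uo ∈ Û z, every w ∈ W and every v ∈ Vn, V (k+1) z ≤ min (g z) (max (ℓ z) (V k (F z (π k z) uo w v))). Fix N ∈ ℕ and z₀ ∈ Z with V N z₀ ≥ 0. Then for all sequences uo : ℕ → Uo, w : ℕ → W, v : ℕ → Vn, defining the closed-loop trajectory z : ℕ → Z by z 0 = z₀ and z (t+1) = F (z t) (π (N - 1 - t) (z t)) (uo t) (w t) (v t), if uo t ∈ Û (z t) for every t < N, then there exists t ≤ N such that ℓ (z t) ≥ 0 and g (z s) ≥ 0 for all s ≤ t. -/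
/-!
With `N - t` steps to go at time `t`, the policy in force is `π (N - 1 - t)`, so the Isaacs
inequality bounds `V (N - t) (z t)` by `g (z t)` and by the larger of `ℓ (z t)` and
`V (N - (t + 1)) (z (t + 1))`. Hence, until `ℓ` attains the initial value, the value along the
trajectory never drops below it, and `g` stays above it meanwhile; the terminal bound
`V 0 ≤ min g ℓ` makes `ℓ` attain it by time `N`.
-/

theorem exists_le_and_forall_le_of_le_min_max {α : Type*} [LinearOrder α] {N : ℕ}
    {a b c : ℕ → α} (hlast : c N ≤ min (a N) (b N))
    (hstep : ∀ t < N, c t ≤ min (a t) (max (b t) (c (t + 1)))) :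
    ∃ t ≤ N, c 0 ≤ b t ∧ ∀ s ≤ t, c 0 ≤ a s := by
  induction N generalizing a b c with
  | zero =>
    obtain ⟨ha, hb⟩ := le_min_iff.mp hlast
    exact ⟨0, le_rfl, hb, fun s hs => Nat.le_zero.mp hs ▸ ha⟩
  | succ N ih =>
    obtain ⟨ha, hbc⟩ := le_min_iff.mp (hstep 0 N.succ_pos)
    rcases le_max_iff.mp hbc with hb | hc
    · exact ⟨0, Nat.zero_le _, hb, fun s hs => Nat.le_zero.mp hs ▸ ha⟩
    · obtain ⟨t, ht, hbt, hat⟩ := ih (a := fun t => a (t + 1)) (b := fun t => b (t + 1))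
        (c := fun t => c (t + 1)) hlast fun t ht => hstep (t + 1) (Nat.succ_lt_succ ht)
      refine ⟨t + 1, Nat.succ_le_succ ht, hc.trans hbt, fun s hs => ?_⟩
      cases s with
      | zero => exact ha
      | succ s => exact hc.trans (hat s (Nat.le_of_succ_le_succ hs))

theorem reach_avoid_of_isaacs_certificate_general
    {α Z Ue Uo W Vn : Type*} [LinearOrder α]
    (F : Z → Ue → Uo → W → Vn → Z) (g ℓ : Z → α) (Ub : Z → Set Uo)
    (V : ℕ → Z → α) (π : ℕ → Z → Ue)
    (hV0 : ∀ z, V 0 z ≤ min (g z) (ℓ z))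
    (hVstep : ∀ (k : ℕ) (z : Z), ∀ uo ∈ Ub z, ∀ (w : W) (v : Vn),
      V (k + 1) z ≤ min (g z) (max (ℓ z) (V k (F z (π k z) uo w v))))
    (N : ℕ) (uo : ℕ → Uo) (w : ℕ → W) (v : ℕ → Vn) (z : ℕ → Z)
    (hzstep : ∀ t < N, z (t + 1) = F (z t) (π (N - 1 - t) (z t)) (uo t) (w t) (v t))
    (huo : ∀ t < N, uo t ∈ Ub (z t)) :
    ∃ t ≤ N, V N (z 0) ≤ ℓ (z t) ∧ ∀ s ≤ t, V N (z 0) ≤ g (z s) := by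
  have hlast : V (N - N) (z N) ≤ min (g (z N)) (ℓ (z N)) := by
    rw [Nat.sub_self]
    exact hV0 (z N)
  have hstep : ∀ t < N,
      V (N - t) (z t) ≤ min (g (z t)) (max (ℓ (z t)) (V (N - (t + 1)) (z (t + 1)))) := by
    intro t ht
    have hnow : N - t = N - 1 - t + 1 := by omega
    have hnext : N - (t + 1) = N - 1 - t := by omega
    rw [hnow, hnext, hzstep t ht]
    exact hVstep (N - 1 - t) (z t) (uo t) (huo t ht) (w t) (v t)
  exact exists_le_and_forall_le_of_le_min_max (c := fun t => V (N - t) (z t)) hlast hstep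

/-- Finite-horizon reach-avoid guarantee from an Isaacs certificate
(Proposition 3.1, certificate form). -/
theorem reach_avoid_of_isaacs_certificate
    {Z Ue Uo W Vn : Type*}
    (F : Z → Ue → Uo → W → Vn → Z) (g ℓ : Z → ℝ) (Ub : Z → Set Uo)
    (V : ℕ → Z → ℝ) (π : ℕ → Z → Ue)
    (hV0 : ∀ z, V 0 z ≤ min (g z) (ℓ z))
    (hVstep : ∀ (k : ℕ) (z : Z), ∀ uo ∈ Ub z, ∀ (w : W) (v : Vn),
      V (k + 1) z ≤ min (g z) (max (ℓ z) (V k (F z (π k z) uo w v))))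
    (N : ℕ) (z₀ : Z) (hinit : V N z₀ ≥ 0)
    (uo : ℕ → Uo) (w : ℕ → W) (v : ℕ → Vn)
    (z : ℕ → Z) (hz0 : z 0 = z₀)
    (hzstep : ∀ t : ℕ,
      z (t + 1) = F (z t) (π (N - 1 - t) (z t)) (uo t) (w t) (v t))
    (huo : ∀ t < N, uo t ∈ Ub (z t)) :
    ∃ t ≤ N, ℓ (z t) ≥ 0 ∧ ∀ s ≤ t, g (z s) ≥ 0 := by
  subst hz0
  obtain ⟨t, ht, hℓ, hg⟩ := reach_avoid_of_isaacs_certificate_general F g ℓ Ub V π hV0 hVstep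
    N uo w v z (fun t _ => hzstep t) huo
  exact ⟨t, ht, hinit.trans hℓ, fun s hs => hinit.trans (hg s hs)⟩
end

section
/- Finite-horizon reach-avoid guarantee via value iteration (Proposition 3.1, value-iteration form). Define V : ℕ → Z → ℝ by V 0 z = min (g z) (ℓ z) and V (k+1) z = (T (V k)) z, where T is the reach-avoid Isaacs operator. Then for every N ∈ ℕ and every z₀ ∈ Z with V N z₀ ≥ 0, there exists a time-varying ego policy π : ℕ → Z → Ue such that for all sequences uo : ℕ → Uo, w : ℕ → W, v : ℕ → Vn, defining the closed-loop trajectory z : ℕ → Z by z 0 = z₀ and z (t+1) = F (z t) (π t (z t)) (uo t) (w t) (v t), if uo t ∈ Û (z t) for every t < N, then there exists t ≤ N with ℓ (z t) ≥ 0 and g (z s) ≥ 0 for all s ≤ t. -/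
/-!
Nonnegativity of a max-min value is a winning condition: since the supremum over the finite ego
control space is attained, `0 ≤ V k z` forces `z` into the set of states from which the ego wins the
qualitative reach-avoid game in `k` steps. That set is built by backward induction on controllable
predecessors, so a winning policy for `k + 1` steps prepends a control keeping every successor in
the `k`-step winning set to a winning policy for `k` steps.
-/

section WinningSets

variable {Z U : Type*}

/-- The controllable predecessor of `S`: the states at which some control `u` sends every successor
into `S`. Nondeterminism is encoded by the set `next z u` of possible successors. -/
def controllablePred (next : Z → U → Set Z) (S : Set Z) : Set Z :=
  {z | ∃ u, next z u ⊆ S}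

/-- The `k`-step reach-avoid set: the states from which the controller can enforce a visit to
`target` within `k` steps, remaining in `safe` up to and including the visit. It is encoded by its
backward recursion rather than by quantifying over policies. -/
def reachAvoidSet (next : Z → U → Set Z) (safe target : Set Z) : ℕ → Set Z
  | 0 => safe ∩ target
  | k + 1 => safe ∩ (target ∪ controllablePred next (reachAvoidSet next safe target k))

theorem exists_selector_controllablePred [Nonempty U] (next : Z → U → Set Z) (S : Set Z) :
    ∃ c : Z → U, ∀ z ∈ controllablePred next S, next z (c z) ⊆ S := by
  have h : ∀ z ∈ controllablePred next S, ∃ u, next z u ⊆ S := fun _ hz => hz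
  choose! c hc using h
  exact ⟨c, hc⟩

theorem exists_policy_reachAvoidSet [Nonempty U] (next : Z → U → Set Z) (safe target : Set Z)
    (N : ℕ) :
    ∃ π : ℕ → Z → U, ∀ z : ℕ → Z, z 0 ∈ reachAvoidSet next safe target N →
      (∀ t < N, z (t + 1) ∈ next (z t) (π t (z t))) →
      ∃ t ≤ N, z t ∈ target ∧ ∀ s ≤ t, z s ∈ safe := by
  induction N with
  | zero =>
    refine ⟨fun _ _ => Classical.arbitrary U, fun z ⟨hsafe, htarget⟩ _ => ?_⟩
    exact ⟨0, le_rfl, htarget, fun s hs => Nat.le_zero.mp hs ▸ hsafe⟩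
  | succ N ih =>
    obtain ⟨π, hπ⟩ := ih
    obtain ⟨c, hc⟩ := exists_selector_controllablePred next (reachAvoidSet next safe target N)
    refine ⟨fun t => t.casesOn c π, fun z ⟨hsafe, hz₀⟩ hz => ?_⟩
    rcases hz₀ with htarget | hpred
    · exact ⟨0, N.succ.zero_le, htarget, fun s hs => Nat.le_zero.mp hs ▸ hsafe⟩
    · have hz₁ : z 1 ∈ reachAvoidSet next safe target N := hc _ hpred (hz 0 N.succ_pos)
      obtain ⟨t, htN, htarget, hsafe_tail⟩ :=
        hπ (fun t => z (t + 1)) hz₁ fun t ht => hz (t + 1) (Nat.succ_lt_succ ht)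
      refine ⟨t + 1, Nat.succ_le_succ htN, htarget, fun s hs => ?_⟩
      cases s with
      | zero => exact hsafe
      | succ s => exact hsafe_tail s (Nat.le_of_succ_le_succ hs)

end WinningSets

section IsaacsValue

variable {Z Ue Uo W Vn : Type*}

-- For `uo ∉ S` the infimum over the empty type `uo ∈ S` takes a junk value, so the left-hand side
-- can be smaller than the infimum over the subtype `S`, but it still bounds `f` on `S` from below.
theorem biInf_iInf_iInf_le {α : Type*} [ConditionallyCompleteLattice α]
    [Finite Uo] [Finite W] [Finite Vn] (S : Set Uo) (f : Uo → W → Vn → α)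
    {uo : Uo} (huo : uo ∈ S) (w : W) (v : Vn) :
    ⨅ uo ∈ S, ⨅ w, ⨅ v, f uo w v ≤ f uo w v :=
  haveI : Nonempty α := ⟨f uo w v⟩
  calc ⨅ uo ∈ S, ⨅ w, ⨅ v, f uo w v
    _ ≤ ⨅ w, ⨅ v, f uo w v :=
      ciInf₂_le (Set.finite_iUnion fun _ => Set.finite_range _).bddBelow uo huo
    _ ≤ f uo w v := ciInf₂_le (Set.finite_iUnion fun _ => Set.finite_range _).bddBelow w v

theorem exists_control_of_le_maxmin {α : Type*} [ConditionallyCompleteLinearOrder α]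
    [Finite Ue] [Nonempty Ue] [Finite Uo] [Finite W] [Finite Vn]
    (S : Set Uo) (f : Ue → Uo → W → Vn → α) {a : α}
    (h : a ≤ ⨆ ue, ⨅ uo ∈ S, ⨅ w, ⨅ v, f ue uo w v) :
    ∃ ue, ∀ uo ∈ S, ∀ w v, a ≤ f ue uo w v := by
  obtain ⟨ue, hue⟩ := exists_eq_ciSup_of_finite
    (f := fun ue => ⨅ uo ∈ S, ⨅ w, ⨅ v, f ue uo w v)
  exact ⟨ue, fun uo huo w v =>
    (h.trans_eq hue.symm).trans (biInf_iInf_iInf_le S (f ue) huo w v)⟩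

/-- The states reachable in one step from `z` under the ego control `ue`, when the opponent is
confined to its inferred bound `Ub z` while disturbance and noise are arbitrary. -/
def admissibleSuccessors (F : Z → Ue → Uo → W → Vn → Z) (Ub : Z → Set Uo) (z : Z) (ue : Ue) :
    Set Z :=
  {z' | ∃ uo ∈ Ub z, ∃ w v, F z ue uo w v = z'}

theorem mem_controllablePred_of_le_maxmin {α : Type*} [ConditionallyCompleteLinearOrder α]
    [Finite Ue] [Nonempty Ue] [Finite Uo] [Finite W] [Finite Vn]
    (F : Z → Ue → Uo → W → Vn → Z) (Ub : Z → Set Uo) (φ : Z → α) {a : α} {z : Z}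
    (h : a ≤ ⨆ ue, ⨅ uo ∈ Ub z, ⨅ w, ⨅ v, φ (F z ue uo w v)) :
    z ∈ controllablePred (admissibleSuccessors F Ub) {y | a ≤ φ y} := by
  obtain ⟨ue, hue⟩ := exists_control_of_le_maxmin (Ub z) (fun ue uo w v => φ (F z ue uo w v)) h
  refine ⟨ue, ?_⟩
  rintro _ ⟨uo, huo, w, v, rfl⟩
  exact hue uo huo w v

theorem superlevel_value_subset_reachAvoidSet {α : Type*} [ConditionallyCompleteLinearOrder α]
    [Finite Ue] [Nonempty Ue] [Finite Uo] [Finite W] [Finite Vn]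
    (F : Z → Ue → Uo → W → Vn → Z) (g ℓ : Z → α) (Ub : Z → Set Uo) (V : ℕ → Z → α)
    (hV0 : ∀ z, V 0 z ≤ min (g z) (ℓ z))
    (hVstep : ∀ k z, V (k + 1) z ≤ min (g z) (max (ℓ z)
      (⨆ ue, ⨅ uo ∈ Ub z, ⨅ w, ⨅ v, V k (F z ue uo w v))))
    (a : α) (k : ℕ) :
    {z | a ≤ V k z} ⊆
      reachAvoidSet (admissibleSuccessors F Ub) {z | a ≤ g z} {z | a ≤ ℓ z} k := by
  induction k with
  | zero => exact fun z hz => le_min_iff.mp (hz.trans (hV0 z))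
  | succ k ih =>
    intro z hz
    obtain ⟨hg, hmax⟩ := le_min_iff.mp (hz.trans (hVstep k z))
    refine ⟨hg, (le_max_iff.mp hmax).imp id fun hmaxmin => ?_⟩
    obtain ⟨ue, hue⟩ := mem_controllablePred_of_le_maxmin F Ub (V k) hmaxmin
    exact ⟨ue, hue.trans ih⟩

end IsaacsValue

/-- Finite-horizon reach-avoid guarantee via value iteration
(Proposition 3.1, value-iteration form). -/
theorem reach_avoid_of_value_iteration
    {Z Ue Uo W Vn : Type*}
    [Fintype Ue] [Nonempty Ue] [Fintype Uo] [Nonempty Uo]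
    [Fintype W] [Nonempty W] [Fintype Vn] [Nonempty Vn]
    (F : Z → Ue → Uo → W → Vn → Z) (g ℓ : Z → ℝ) (Ub : Z → Set Uo)
    (hUb : ∀ z, (Ub z).Nonempty)
    (V : ℕ → Z → ℝ)
    (hV0 : ∀ z, V 0 z = min (g z) (ℓ z))
    (hVstep : ∀ (k : ℕ) (z : Z),
      V (k + 1) z = min (g z) (max (ℓ z)
        (⨆ ue : Ue, ⨅ uo ∈ Ub z, ⨅ w : W, ⨅ v : Vn, V k (F z ue uo w v))))
    (N : ℕ) (z₀ : Z) (hinit : V N z₀ ≥ 0) :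
    ∃ π : ℕ → Z → Ue,
      ∀ (uo : ℕ → Uo) (w : ℕ → W) (v : ℕ → Vn) (z : ℕ → Z),
        z 0 = z₀ →
        (∀ t : ℕ, z (t + 1) = F (z t) (π t (z t)) (uo t) (w t) (v t)) →
        (∀ t < N, uo t ∈ Ub (z t)) →
        ∃ t ≤ N, ℓ (z t) ≥ 0 ∧ ∀ s ≤ t, g (z s) ≥ 0 := by
  obtain ⟨π, hπ⟩ :=
    exists_policy_reachAvoidSet (admissibleSuccessors F Ub) {z | 0 ≤ g z} {z | 0 ≤ ℓ z} N
  have hwin : z₀ ∈ reachAvoidSet (admissibleSuccessors F Ub) {z | 0 ≤ g z} {z | 0 ≤ ℓ z} N :=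
    superlevel_value_subset_reachAvoidSet F g ℓ Ub V (fun z => (hV0 z).le)
      (fun k z => (hVstep k z).le) 0 N hinit
  refine ⟨π, fun uo w v z hz0 hz huo => hπ z (hz0 ▸ hwin) fun t ht => ?_⟩
  exact ⟨uo t, huo t ht, w t, v t, (hz t).symm⟩
end

section
/- Infinite-horizon safety invariance and recursive feasibility. Suppose V : Z → ℝ and a stationary ego policy π : Z → Ue satisfy: (i) V z ≤ g z for every z; and (ii) for every z ∈ Z, every uo ∈ Û z, every w ∈ W and v ∈ Vn, V z ≤ max (ℓ z) (V (F z (π z) uo w v)). Let z₀ ∈ Z with V z₀ ≥ 0, and let z : ℕ → Z be any closed-loop trajectory with z 0 = z₀ and z (t+1) = F (z t) (π (z t)) (uo t) (w t) (v t), where uo t ∈ Û (z t) for all t. Then for every t ∈ ℕ, if ℓ (z s) < 0 for all s < t, then V (z t) ≥ 0 and g (z t) ≥ 0; i.e., until the target set is reached, the system remains in the value superlevel set and outside the failure set. -/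
theorem le_of_le_max_succ_of_forall_lt {α : Type*} [LinearOrder α] {x l : ℕ → α} {c : α}
    (hx₀ : c ≤ x 0) (hx : ∀ t, x t ≤ max (l t) (x (t + 1))) {t : ℕ} (hl : ∀ s < t, l s < c) :
    c ≤ x t := by
  induction t with
  | zero => exact hx₀
  | succ t ih =>
    have hxt : c ≤ x t := ih fun s hs => hl s (hs.trans t.lt_succ_self)
    have hmax : c ≤ l t ∨ c ≤ x (t + 1) := le_max_iff.mp (hxt.trans (hx t))
    exact hmax.resolve_left (hl t t.lt_succ_self).not_ge

theorem safety_invariance_of_certificate_general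
    {Z Ue Uo W Vn α : Type*} [LinearOrder α]
    (F : Z → Ue → Uo → W → Vn → Z) (g ℓ : Z → α) (Ub : Z → Set Uo)
    (V : Z → α) (π : Z → Ue)
    (hVg : ∀ z, V z ≤ g z)
    (hVstep : ∀ z : Z, ∀ uo ∈ Ub z, ∀ (w : W) (v : Vn),
      V z ≤ max (ℓ z) (V (F z (π z) uo w v)))
    (c : α) (uo : ℕ → Uo) (w : ℕ → W) (v : ℕ → Vn)
    (z : ℕ → Z) (hinit : c ≤ V (z 0))
    (hzstep : ∀ t : ℕ, z (t + 1) = F (z t) (π (z t)) (uo t) (w t) (v t))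
    (huo : ∀ t : ℕ, uo t ∈ Ub (z t))
    (t : ℕ) (hℓ : ∀ s < t, ℓ (z s) < c) :
    c ≤ V (z t) ∧ c ≤ g (z t) := by
  have hstep (s : ℕ) : V (z s) ≤ max (ℓ (z s)) (V (z (s + 1))) := by
    rw [hzstep s]
    exact hVstep (z s) (uo s) (huo s) (w s) (v s)
  have hV : c ≤ V (z t) :=
    le_of_le_max_succ_of_forall_lt (x := fun s => V (z s)) hinit hstep hℓ
  exact ⟨hV, hV.trans (hVg (z t))⟩

/-- Infinite-horizon safety invariance and recursive feasibility. -/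
theorem safety_invariance_of_certificate
    {Z Ue Uo W Vn : Type*}
    (F : Z → Ue → Uo → W → Vn → Z) (g ℓ : Z → ℝ) (Ub : Z → Set Uo)
    (V : Z → ℝ) (π : Z → Ue)
    (hVg : ∀ z, V z ≤ g z)
    (hVstep : ∀ z : Z, ∀ uo ∈ Ub z, ∀ (w : W) (v : Vn),
      V z ≤ max (ℓ z) (V (F z (π z) uo w v)))
    (z₀ : Z) (hinit : V z₀ ≥ 0)
    (uo : ℕ → Uo) (w : ℕ → W) (v : ℕ → Vn)
    (z : ℕ → Z) (hz0 : z 0 = z₀)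
    (hzstep : ∀ t : ℕ, z (t + 1) = F (z t) (π (z t)) (uo t) (w t) (v t))
    (huo : ∀ t : ℕ, uo t ∈ Ub (z t)) :
    ∀ t : ℕ, (∀ s < t, ℓ (z s) < 0) → V (z t) ≥ 0 ∧ g (z t) ≥ 0 :=
  safety_invariance_of_certificate_general F g ℓ Ub V π hVg hVstep 0 uo w v z
    (hz0.symm ▸ hinit) hzstep huo
end

section
/- Deceptive opponent guarantee (dual of Proposition 3.1). Suppose V : ℕ → Z → ℝ and opponent strategies σu : ℕ → Z → Ue → Uo, σw : ℕ → Z → Ue → W, σv : ℕ → Z → Ue → Vn satisfy: (i) σu k z ue ∈ Û z for all k, z, ue; (ii) V 0 z ≥ min (g z) (ℓ z) for every z; and (iii) for every k, z, and ue ∈ Ue, V (k+1) z ≥ min (g z) (max (ℓ z) (V k (F z ue (σu k z ue) (σw k z ue) (σv k z ue)))). Fix N ∈ ℕ and z₀ ∈ Z with V N z₀ < 0. Then for every ego action sequence ue : ℕ → Ue, the closed-loop trajectory z : ℕ → Z defined by z 0 = z₀ and z (t+1) = F (z t) (ue t) (σu (N - 1 - t) (z t) (ue t)) (σw (N - 1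 - t) (z t) (ue t)) (σv (N - 1 - t) (z t) (ue t)) admits no time t ≤ N such that ℓ (z t) ≥ 0 and g (z s) ≥ 0 for all s ≤ t; i.e., the opponent prevents the ego agent from safely reaching the target within horizon N. -/
/-!
Reaching the target safely within `N + 1` steps means being safe now and either being at the target
now or reaching it safely within `N` steps from the next state. The Bellman inequality
`g z ⊓ (ℓ z ⊔ V N z') ≤ V (N + 1) z` has the same shape, so by induction on the horizon the value at
the initial state is at least every level at which the trajectory succeeds.
-/

section ReachAvoid

variable {Z U α : Type*}

/-- The reach-avoid event at level `c`: within horizon `N` the trajectory `z` reaches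
`{x | c ≤ ℓ x}`, staying in `{x | c ≤ g x}` up to and including the time of arrival. -/
def ReachesSafely [LE α] (g ℓ : Z → α) (c : α) (N : ℕ) (z : ℕ → Z) : Prop :=
  ∃ t ≤ N, c ≤ ℓ (z t) ∧ ∀ s ≤ t, c ≤ g (z s)

/-- `V` is a supersolution of the reach-avoid Bellman recursion for the dynamics `f` obtained by
fixing the opponent's strategies. Time is counted backwards: `V k` is the value with `k` steps to
go, and `f k` is the transition after which `k` steps remain. -/
structure IsReachAvoidSupersolution [Lattice α] (f : ℕ → Z → U → Z) (g ℓ : Z → α)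
    (V : ℕ → Z → α) : Prop where
  terminal : ∀ x, g x ⊓ ℓ x ≤ V 0 x
  step : ∀ k x u, g x ⊓ (ℓ x ⊔ V k (f k x u)) ≤ V (k + 1) x

theorem reachesSafely_zero_iff [LE α] {g ℓ : Z → α} {c : α} {z : ℕ → Z} :
    ReachesSafely g ℓ c 0 z ↔ c ≤ g (z 0) ∧ c ≤ ℓ (z 0) := by
  simp [ReachesSafely, and_comm]

theorem ReachesSafely.of_succ [LE α] {g ℓ : Z → α} {c : α} {N : ℕ} {z : ℕ → Z}
    (h : ReachesSafely g ℓ c (N + 1) z) :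
    c ≤ g (z 0) ∧ (c ≤ ℓ (z 0) ∨ ReachesSafely g ℓ c N fun t => z (t + 1)) := by
  obtain ⟨t, htN, hℓ, hg⟩ := h
  refine ⟨hg 0 t.zero_le, ?_⟩
  cases t with
  | zero => exact .inl hℓ
  | succ t =>
    exact .inr ⟨t, Nat.le_of_succ_le_succ htN, hℓ, fun s hs => hg (s + 1) (Nat.succ_le_succ hs)⟩

variable [Lattice α] {f : ℕ → Z → U → Z} {g ℓ : Z → α} {V : ℕ → Z → α} {c : α} {N : ℕ}
  {u : ℕ → U} {z : ℕ → Z}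

theorem IsReachAvoidSupersolution.le_value_of_reachesSafely
    (hV : IsReachAvoidSupersolution f g ℓ V)
    (hz : ∀ t < N, z (t + 1) = f (N - 1 - t) (z t) (u t))
    (h : ReachesSafely g ℓ c N z) : c ≤ V N (z 0) := by
  induction N generalizing u z with
  | zero =>
    obtain ⟨hg, hℓ⟩ := reachesSafely_zero_iff.mp h
    exact (le_inf hg hℓ).trans (hV.terminal (z 0))
  | succ N ih =>
    obtain ⟨hg, hreach⟩ := h.of_succ
    have hfirst : z 1 = f N (z 0) (u 0) := hz 0 N.succ_pos
    have htail : ∀ t < N, z (t + 1 + 1) = f (N - 1 - t) (z (t + 1)) (u (t + 1)) := by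
      intro t ht
      rw [hz (t + 1) (Nat.succ_lt_succ ht), show N + 1 - 1 - (t + 1) = N - 1 - t by omega]
    have hnext : c ≤ ℓ (z 0) ⊔ V N (z 1) :=
      hreach.elim le_sup_of_le_left fun htarget =>
        le_sup_of_le_right (ih (u := fun t => u (t + 1)) htail htarget)
    calc
      c ≤ g (z 0) ⊓ (ℓ (z 0) ⊔ V N (f N (z 0) (u 0))) := le_inf hg (hfirst ▸ hnext)
      _ ≤ V (N + 1) (z 0) := hV.step N (z 0) (u 0)

theorem opponent_prevents_reach_avoid_general
    (hV : IsReachAvoidSupersolution f g ℓ V)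
    (hz : ∀ t < N, z (t + 1) = f (N - 1 - t) (z t) (u t))
    (hinit : ¬ c ≤ V N (z 0)) : ¬ ReachesSafely g ℓ c N z :=
  mt (hV.le_value_of_reachesSafely hz) hinit

end ReachAvoid

/-- Deceptive opponent guarantee (dual of Proposition 3.1). -/
theorem opponent_prevents_reach_avoid
    {Z Ue Uo W Vn : Type*}
    (F : Z → Ue → Uo → W → Vn → Z) (g ℓ : Z → ℝ) (Ub : Z → Set Uo)
    (V : ℕ → Z → ℝ)
    (σu : ℕ → Z → Ue → Uo) (σw : ℕ → Z → Ue → W) (σv : ℕ → Z → Ue → Vn)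
    (hσu : ∀ (k : ℕ) (z : Z) (ue : Ue), σu k z ue ∈ Ub z)
    (hV0 : ∀ z, V 0 z ≥ min (g z) (ℓ z))
    (hVstep : ∀ (k : ℕ) (z : Z) (ue : Ue),
      V (k + 1) z ≥ min (g z) (max (ℓ z)
        (V k (F z ue (σu k z ue) (σw k z ue) (σv k z ue)))))
    (N : ℕ) (z₀ : Z) (hinit : V N z₀ < 0)
    (ue : ℕ → Ue) (z : ℕ → Z) (hz0 : z 0 = z₀)
    (hzstep : ∀ t : ℕ,
      z (t + 1) = F (z t) (ue t) (σu (N - 1 - t) (z t) (ue t))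
        (σw (N - 1 - t) (z t) (ue t)) (σv (N - 1 - t) (z t) (ue t))) :
    ¬ ∃ t ≤ N, ℓ (z t) ≥ 0 ∧ ∀ s ≤ t, g (z s) ≥ 0 := by
  subst hz0
  exact opponent_prevents_reach_avoid_general
    (f := fun k x a => F x a (σu k x a) (σw k x a) (σv k x a))
    ⟨hV0, hVstep⟩ (fun t _ => hzstep t) hinit.not_ge
end

section
/- Finite-time reach-avoid guarantee from a discounted Isaacs certificate. Let γ ∈ ℝ with 0 < γ < 1 and M > 0. Suppose V : Z → ℝ and a stationary ego policy π : Z → Ue satisfy: (i) V z ≤ g z for every z; (ii) V z ≤ M for every z; and (iii) for every z ∈ Z, every uo ∈ Û z, every w ∈ W and v ∈ Vn, V z ≤ max (ℓ z) (γ * V (F z (π z) uo w v)). Let z₀ ∈ Z with V z₀ > 0, and let z : ℕ → Z be any closed-loop trajectory with z 0 = z₀ and z (t+1) = F (z t) (π (z t)) (uo t) (w t) (v t), where uo t ∈ Û (z t) for all t. Then: (a) for every t ∈ ℕ, if ℓ (z s) < 0 for all s < t, then γ ^ t * V (z t) ≥ V z₀ and g (z t) ≥ 0; and (b) there exists t ∈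 ℕ such that ℓ (z t) ≥ 0 and g (z s) ≥ 0 for all s ≤ t. -/
/-! Below, `V t`, `ℓ t` and `g t` are the value, target margin and safety margin read along a single
trajectory. As long as the target margin has not been positive, the maximum in the certificate
inequality is attained by the discounted term, because the value is positive; hence
`V t ≤ γ * V (t + 1)`. So the value stays positive, which gives safety, and it grows geometrically,
which contradicts its upper bound if the target is never reached. Safety up to arrival is then read
off at the first hitting time. -/

section Semiring

variable {K : Type*} [Semiring K] [LinearOrder K] [IsStrictOrderedRing K]
  {γ : K} {V ℓ : ℕ → K} {t : ℕ}

theorem le_pow_mul_of_le_max_mul_succ (hγ : 0 ≤ γ) (hV₀ : 0 < V 0)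
    (hstep : ∀ t, V t ≤ max (ℓ t) (γ * V (t + 1))) (hℓ : ∀ s < t, ℓ s ≤ 0) :
    V 0 ≤ γ ^ t * V t := by
  induction t with
  | zero => simp
  | succ t ih =>
    have growth : V 0 ≤ γ ^ t * V t := ih fun s hs => hℓ s (hs.trans t.lt_succ_self)
    have value_pos : 0 < V t := pos_of_mul_pos_right (hV₀.trans_le growth) (pow_nonneg hγ t)
    have discounted : V t ≤ γ * V (t + 1) :=
      (le_max_iff.mp (hstep t)).resolve_left ((hℓ t t.lt_succ_self).trans_lt value_pos).not_ge
    calc V 0 ≤ γ ^ t * V t := growth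
      _ ≤ γ ^ t * (γ * V (t + 1)) := mul_le_mul_of_nonneg_left discounted (pow_nonneg hγ t)
      _ = γ ^ (t + 1) * V (t + 1) := by rw [pow_succ, mul_assoc]

theorem pos_of_le_max_mul_succ (hγ : 0 ≤ γ) (hV₀ : 0 < V 0)
    (hstep : ∀ t, V t ≤ max (ℓ t) (γ * V (t + 1))) (hℓ : ∀ s < t, ℓ s ≤ 0) :
    0 < V t :=
  pos_of_mul_pos_right (hV₀.trans_le (le_pow_mul_of_le_max_mul_succ hγ hV₀ hstep hℓ))
    (pow_nonneg hγ t)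

end Semiring

section Archimedean

variable {K : Type*} [Field K] [LinearOrder K] [IsStrictOrderedRing K] [Archimedean K]
  {γ M : K} {V ℓ g : ℕ → K}

theorem exists_pos_of_le_max_mul_succ (hγ₀ : 0 ≤ γ) (hγ₁ : γ < 1) (hV₀ : 0 < V 0)
    (hVM : ∀ t, V t ≤ M) (hstep : ∀ t, V t ≤ max (ℓ t) (γ * V (t + 1))) :
    ∃ t, 0 < ℓ t := by
  by_contra! never_reached
  have hM : 0 < M := hV₀.trans_le (hVM 0)
  obtain ⟨n, hn⟩ : ∃ n : ℕ, γ ^ n < V 0 / M := exists_pow_lt_of_lt_one (div_pos hV₀ hM) hγ₁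
  refine lt_irrefl (V 0) ?_
  calc V 0 ≤ γ ^ n * V n :=
        le_pow_mul_of_le_max_mul_succ hγ₀ hV₀ hstep fun s _ => never_reached s
    _ ≤ γ ^ n * M := mul_le_mul_of_nonneg_left (hVM n) (pow_nonneg hγ₀ n)
    _ < V 0 := (lt_div_iff₀ hM).mp hn

theorem reach_avoid_of_discounted_certificate_general (hγ₀ : 0 ≤ γ) (hγ₁ : γ < 1)
    (hV₀ : 0 < V 0) (hVg : ∀ t, V t ≤ g t) (hVM : ∀ t, V t ≤ M)
    (hstep : ∀ t, V t ≤ max (ℓ t) (γ * V (t + 1))) :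
    (∀ t, (∀ s < t, ℓ s ≤ 0) → V 0 ≤ γ ^ t * V t ∧ 0 < g t) ∧
      ∃ t, 0 < ℓ t ∧ ∀ s ≤ t, 0 < g s := by
  have safe : ∀ t, (∀ s < t, ℓ s ≤ 0) → 0 < g t := fun t hℓ =>
    (pos_of_le_max_mul_succ hγ₀ hV₀ hstep hℓ).trans_le (hVg t)
  refine ⟨fun t hℓ => ⟨le_pow_mul_of_le_max_mul_succ hγ₀ hV₀ hstep hℓ, safe t hℓ⟩, ?_⟩
  have reached : ∃ t, 0 < ℓ t := exists_pos_of_le_max_mul_succ hγ₀ hγ₁ hV₀ hVM hstep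
  classical
  exact ⟨Nat.find reached, Nat.find_spec reached, fun s hs =>
    safe s fun r hr => not_lt.mp (Nat.find_min reached (hr.trans_le hs))⟩

end Archimedean

/-- Finite-time reach-avoid guarantee from a discounted Isaacs certificate. -/
theorem reach_avoid_of_discounted_certificate
    {Z Ue Uo W Vn : Type*}
    (F : Z → Ue → Uo → W → Vn → Z) (g ℓ : Z → ℝ) (Ub : Z → Set Uo)
    (γ : ℝ) (hγ0 : 0 < γ) (hγ1 : γ < 1) (M : ℝ) (hM : 0 < M)
    (V : Z → ℝ) (π : Z → Ue)
    (hVg : ∀ z, V z ≤ g z)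
    (hVM : ∀ z, V z ≤ M)
    (hVstep : ∀ z : Z, ∀ uo ∈ Ub z, ∀ (w : W) (v : Vn),
      V z ≤ max (ℓ z) (γ * V (F z (π z) uo w v)))
    (z₀ : Z) (hinit : V z₀ > 0)
    (uo : ℕ → Uo) (w : ℕ → W) (v : ℕ → Vn)
    (z : ℕ → Z) (hz0 : z 0 = z₀)
    (hzstep : ∀ t : ℕ, z (t + 1) = F (z t) (π (z t)) (uo t) (w t) (v t))
    (huo : ∀ t : ℕ, uo t ∈ Ub (z t)) :
    (∀ t : ℕ, (∀ s < t, ℓ (z s) < 0) →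
      γ ^ t * V (z t) ≥ V z₀ ∧ g (z t) ≥ 0) ∧
    (∃ t : ℕ, ℓ (z t) ≥ 0 ∧ ∀ s ≤ t, g (z s) ≥ 0) := by
  subst hz0
  obtain ⟨growth, t, reached, safe⟩ := reach_avoid_of_discounted_certificate_general
    hγ0.le hγ1 hinit (fun t => hVg (z t)) (fun t => hVM (z t))
    (fun t => hzstep t ▸ hVstep (z t) (uo t) (huo t) (w t) (v t))
  exact ⟨fun t hℓ => (growth t fun s hs => (hℓ s hs).le).imp_right le_of_lt,
    t, reached.le, fun s hs => (safe s hs).le⟩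
end
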